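/- Let n ≥ 2 be an even integer. Then for every connected simple graph G on n vertices with domination number n/2, ρ(G) ≥ ρ(P_{n/2} ∘ K_1), with equality if and only if G is isomorphic to P_{n/2} ∘ K_1. -/

import Mathlib

open SimpleGraph

/-- Adjacency matrix of a simple graph over ℝ. -/
noncomputable def adjMat {V : Type*} (G : SimpleGraph V) : Matrix V V ℝ :=
  Matrix.of fun i j => @ite ℝ (G.Adj i j) (Classical.propDecidable _) 1 0

/-- Spectral radius: the largest eigenvalue (supremum of the real spectrum)
of the adjacency matrix. -/
noncomputable def specRad {V : Type*} [Fintype V] [DecidableEq V]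
    (G : SimpleGraph V) : ℝ :=
  sSup (spectrum ℝ (adjMat G))

/-- `D` is a dominating set of `G`. -/
def IsDomSet {V : Type*} (G : SimpleGraph V) (D : Finset V) : Prop :=
  ∀ v ∉ D, ∃ u ∈ D, G.Adj u v

/-- The domination number of `G`. -/
noncomputable def domNum {V : Type*} [Fintype V] (G : SimpleGraph V) : ℕ :=
  sInf {k | ∃ D : Finset V, IsDomSet G D ∧ D.card = k}

/-- The corona `H ∘ K₁`: each vertex `v` of `H` (copied as `Sum.inl v`) gets a new
pendant neighbour `Sum.inr v`. -/
def corona {V : Type*} (H : SimpleGraph V) : SimpleGraph (V ⊕ V) :=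
  SimpleGraph.fromRel (fun x y =>
    (∃ u v, x = Sum.inl u ∧ y = Sum.inl v ∧ H.Adj u v) ∨
    (∃ v, x = Sum.inl v ∧ y = Sum.inr v))


section Spectral

theorem adjMat_apply {V : Type*} (G : SimpleGraph V) (i j : V) :
    adjMat G i j = @ite ℝ (G.Adj i j) (Classical.propDecidable _) 1 0 := rfl

theorem adjMat_of_adj {V : Type*} {G : SimpleGraph V} {i j : V} (h : G.Adj i j) :
    adjMat G i j = 1 := by
  rw [adjMat_apply]; exact if_pos h

theorem adjMat_of_not_adj {V : Type*} {G : SimpleGraph V} {i j : V} (h : ¬ G.Adj i j) :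
    adjMat G i j = 0 := by
  rw [adjMat_apply]; exact if_neg h

theorem adjMat_nonneg {V : Type*} (G : SimpleGraph V) (i j : V) : 0 ≤ adjMat G i j := by
  by_cases h : G.Adj i j
  · rw [adjMat_of_adj h]; norm_num
  · rw [adjMat_of_not_adj h]

theorem adjMat_symm {V : Type*} (G : SimpleGraph V) (i j : V) :
    adjMat G i j = adjMat G j i := by
  by_cases h : G.Adj i j
  · rw [adjMat_of_adj h, adjMat_of_adj h.symm]
  · rw [adjMat_of_not_adj h, adjMat_of_not_adj (fun h' => h h'.symm)]

theorem adjMat_isHermitian {V : Type*} (G : SimpleGraph V) : (adjMat G).IsHermitian := by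
  ext i j
  simp [Matrix.conjTranspose_apply, adjMat_symm G j i]

variable {V : Type*} [Fintype V] [DecidableEq V]

theorem mem_spectrum_adjMat (G : SimpleGraph V) (k : ℝ) :
    k ∈ spectrum ℝ (adjMat G) ↔ ∃ z : V → ℝ, z ≠ 0 ∧ ∀ v, ∑ w, adjMat G v w * z w = k * z v := by
  rw [← Matrix.spectrum_toLin', ← Module.End.hasEigenvalue_iff_mem_spectrum]
  constructor
  · intro h
    obtain ⟨z, hz⟩ := h.exists_hasEigenvector
    refine ⟨z, hz.2, fun v => ?_⟩
    have := congrFun hz.apply_eq_smul v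
    simpa [Matrix.toLin'_apply, Matrix.mulVec, dotProduct] using this
  · rintro ⟨z, hz, h⟩
    refine Module.End.hasEigenvalue_of_hasEigenvector (x := z) ⟨?_, hz⟩
    rw [Module.End.mem_eigenspace_iff]
    ext v
    simpa [Matrix.toLin'_apply, Matrix.mulVec, dotProduct] using h v

theorem sum_adj_comm (G : SimpleGraph V) (y z : V → ℝ) :
    ∑ v, y v * ∑ w, adjMat G v w * z w = ∑ w, z w * ∑ v, adjMat G w v * y v := by
  simp_rw [Finset.mul_sum]
  rw [Finset.sum_comm]
  refine Finset.sum_congr rfl fun w _ => Finset.sum_congr rfl fun v _ => ?_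
  rw [adjMat_symm G v w]; ring

theorem specRad_eq_of_pos [Nonempty V] (G : SimpleGraph V) (y : V → ℝ) (hy : ∀ v, 0 < y v)
    (L : ℝ) (h : ∀ v, ∑ w, adjMat G v w * y w = L * y v) : specRad G = L := by
  have hmem : L ∈ spectrum ℝ (adjMat G) := by
    rw [mem_spectrum_adjMat]
    refine ⟨y, fun h0 => ?_, h⟩
    obtain ⟨v⟩ := ‹Nonempty V›
    have := hy v
    rw [h0] at this
    simp at this
  refine IsGreatest.csSup_eq ⟨hmem, ?_⟩
  intro k hk
  rw [mem_spectrum_adjMat] at hk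
  obtain ⟨z, hz, hk⟩ := hk
  have h1 : ∀ v, k * |z v| ≤ ∑ w, adjMat G v w * |z w| := by
    intro v
    calc k * |z v| ≤ |k| * |z v| := by gcongr; exact le_abs_self k
      _ = |k * z v| := (abs_mul _ _).symm
      _ = |∑ w, adjMat G v w * z w| := by rw [hk]
      _ ≤ ∑ w, |adjMat G v w * z w| := Finset.abs_sum_le_sum_abs _ _
      _ = _ := by
        refine Finset.sum_congr rfl fun w _ => ?_
        rw [abs_mul, abs_of_nonneg (adjMat_nonneg G v w)]
  have h2 : ∑ v, y v * (k * |z v|) ≤ ∑ v, y v * ∑ w, adjMat G v w * |z w| :=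
    Finset.sum_le_sum fun v _ => mul_le_mul_of_nonneg_left (h1 v) (hy v).le
  rw [sum_adj_comm] at h2
  simp_rw [h] at h2
  have h3 : 0 < ∑ v, y v * |z v| := by
    obtain ⟨v, hv⟩ := Function.ne_iff.mp hz
    refine Finset.sum_pos' (fun v _ => mul_nonneg (hy v).le (abs_nonneg _)) ⟨v, Finset.mem_univ v, ?_⟩
    exact mul_pos (hy v) (abs_pos.mpr hv)
  have h4 : k * ∑ v, y v * |z v| ≤ L * ∑ v, y v * |z v| := by
    rw [Finset.mul_sum, Finset.mul_sum]
    calc _ = ∑ v, y v * (k * |z v|) := Finset.sum_congr rfl fun v _ => by ring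
      _ ≤ _ := h2
      _ = _ := Finset.sum_congr rfl fun v _ => by ring
  exact le_of_mul_le_mul_right h4 h3

theorem exists_perron [Nonempty V] (G : SimpleGraph V) (hG : G.Connected) :
    ∃ x : V → ℝ, (∀ v, 0 < x v) ∧ ∀ v, ∑ w, adjMat G v w * x w = specRad G * x v := by
  have hH := adjMat_isHermitian G
  have hspec := hH.spectrum_real_eq_range_eigenvalues
  have hne : (spectrum ℝ (adjMat G)).Nonempty := by rw [hspec]; exact Set.range_nonempty _
  have hfin : (spectrum ℝ (adjMat G)).Finite := by rw [hspec]; exact Set.finite_range _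
  have hmem : specRad G ∈ spectrum ℝ (adjMat G) := hne.csSup_mem hfin
  have hle : ∀ k ∈ spectrum ℝ (adjMat G), k ≤ specRad G := fun k hk => le_csSup hfin.bddAbove hk
  set r := specRad G with hr
  obtain ⟨z, hz, hzr⟩ := (mem_spectrum_adjMat G r).1 hmem
  have hpsd : (algebraMap ℝ (Matrix V V ℝ) r - adjMat G).PosSemidef := by
    rw [Matrix.posSemidef_iff_isHermitian_and_spectrum_nonneg]
    refine ⟨?_, ?_⟩
    · refine Matrix.IsHermitian.sub ?_ hH
      rw [Matrix.algebraMap_eq_diagonal]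
      exact Matrix.isHermitian_diagonal _
    · rw [← spectrum.singleton_sub_eq]
      rintro _ ⟨a, ha, b, hb, rfl⟩
      rw [Set.mem_singleton_iff] at ha
      subst ha
      have := hle b hb
      simpa using this
  have hmv : ∀ (u : V → ℝ) v, ((algebraMap ℝ (Matrix V V ℝ) r - adjMat G).mulVec u) v
      = r * u v - ∑ w, adjMat G v w * u w := by
    intro u v
    rw [Matrix.sub_mulVec, Matrix.algebraMap_eq_diagonal]
    simp [Matrix.mulVec, dotProduct, Matrix.diagonal_apply]
  set x : V → ℝ := fun v => |z v| with hx
  have hx0 : ∀ v, 0 ≤ x v := fun v => abs_nonneg _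
  have hq : star x ⬝ᵥ ((algebraMap ℝ (Matrix V V ℝ) r - adjMat G).mulVec x) = 0 := by
    apply le_antisymm
    · simp only [dotProduct, hmv, star_trivial]
      have : ∀ v, x v * (r * x v - ∑ w, adjMat G v w * x w) ≤
          z v * (r * z v - ∑ w, adjMat G v w * z w) := by
        intro v
        have e1 : x v * x v = z v * z v := abs_mul_abs_self _
        have e2 : z v * ∑ w, adjMat G v w * z w ≤ x v * ∑ w, adjMat G v w * x w := by
          rw [Finset.mul_sum, Finset.mul_sum]
          refine Finset.sum_le_sum fun w _ => ?_
          calc z v * (adjMat G v w * z w) ≤ |z v * (adjMat G v w * z w)| := le_abs_self _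
            _ = _ := by rw [abs_mul, abs_mul, abs_of_nonneg (adjMat_nonneg G v w)]
        have e3 : x v * (r * x v) = z v * (r * z v) := by
          linear_combination r * e1
        rw [mul_sub, mul_sub, e3]
        linarith
      refine (Finset.sum_le_sum fun v _ => this v).trans ?_
      simp [hzr]
    · exact hpsd.dotProduct_mulVec_nonneg x
  rw [hpsd.dotProduct_mulVec_zero_iff] at hq
  have heq : ∀ v, ∑ w, adjMat G v w * x w = r * x v := by
    intro v
    have := congrFun hq v
    rw [hmv] at this
    simp only [Pi.zero_apply] at this
    linarith
  refine ⟨x, ?_, heq⟩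
  have hzero : ∀ v w, G.Adj v w → x v = 0 → x w = 0 := by
    intro v w hvw hv
    have h := heq v
    rw [hv, mul_zero, Finset.sum_eq_zero_iff_of_nonneg
      (fun w _ => mul_nonneg (adjMat_nonneg G v w) (hx0 w))] at h
    have := h w (Finset.mem_univ w)
    rwa [adjMat_of_adj hvw, one_mul] at this
  have hzero' : ∀ v w, G.Reachable v w → x v = 0 → x w = 0 := by
    rintro v w ⟨p⟩
    induction p with
    | nil => exact id
    | cons h p ih => exact fun h0 => ih (hzero _ _ h h0)
  intro v
  refine lt_of_le_of_ne (hx0 v) fun h0 => hz ?_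
  ext w
  exact abs_eq_zero.mp (hzero' v w (hG.preconnected v w) h0.symm)

end Spectral

section Trig

/-- ratio of consecutive sines -/
noncomputable def hr (t : ℝ) (i : ℕ) : ℝ := Real.sin (i * t) / Real.sin ((i + 1) * t)

theorem sin_identity (a b t : ℝ) :
    Real.sin a * Real.sin (b + t) * Real.sin (a + b + t)
      + Real.sin b * Real.sin (a + t) * Real.sin (a + b + t)
      - Real.sin (a + b) * (Real.sin (a + t) * Real.sin (b + t))
      = Real.sin a * Real.sin b * Real.sin (a + b + 2 * t) := by
  have ha := Real.sin_sq_add_cos_sq a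
  have hb := Real.sin_sq_add_cos_sq b
  have ht := Real.sin_sq_add_cos_sq t
  rw [show a + b + 2 * t = a + b + t + t by ring]
  simp only [Real.sin_add, Real.cos_add]
  generalize Real.sin a = sa at *
  generalize Real.sin b = sb at *
  generalize Real.sin t = st at *
  generalize Real.cos a = ca at *
  generalize Real.cos b = cb at *
  generalize Real.cos t = ct at *
  have ha' : ca ^ 2 = 1 - sa ^ 2 := by linarith
  have hb' : cb ^ 2 = 1 - sb ^ 2 := by linarith
  have ht' : ct ^ 2 = 1 - st ^ 2 := by linarith
  grind

theorem sin_pos_of {m : ℕ} {t : ℝ} (ht : t = Real.pi / (m + 1)) {i : ℕ} (h0 : 0 < i)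
    (h1 : i ≤ m) : 0 < Real.sin (i * t) := by
  have hm : (0 : ℝ) < m + 1 := by positivity
  have h0' : (0 : ℝ) < i := by exact_mod_cast h0
  have h1' : (i : ℝ) < m + 1 := by exact_mod_cast Nat.lt_succ_of_le h1
  have hpi := Real.pi_pos
  apply Real.sin_pos_of_pos_of_lt_pi
  · rw [ht]; positivity
  · rw [ht, ← mul_div_assoc, div_lt_iff₀ hm]; nlinarith

theorem sin_nonneg_of {m : ℕ} {t : ℝ} (ht : t = Real.pi / (m + 1)) {i : ℕ}
    (h1 : i ≤ m + 1) : 0 ≤ Real.sin (i * t) := by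
  have hm : (0 : ℝ) < m + 1 := by positivity
  have h1' : (i : ℝ) ≤ m + 1 := by exact_mod_cast h1
  have hpi := Real.pi_pos
  apply Real.sin_nonneg_of_nonneg_of_le_pi
  · rw [ht]; positivity
  · rw [ht, ← mul_div_assoc, div_le_iff₀ hm]; nlinarith

theorem hr_diff {m : ℕ} {t : ℝ} (ht : t = Real.pi / (m + 1)) {i j : ℕ} (h : i + j + 1 ≤ m) :
    hr t i + hr t j - hr t (i + j) = Real.sin (i * t) * Real.sin (j * t) *
      Real.sin ((i + j + 2 : ℕ) * t) / (Real.sin ((i + 1 : ℕ) * t) * Real.sin ((j + 1 : ℕ) * t) *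
        Real.sin ((i + j + 1 : ℕ) * t)) := by
  have h1 := sin_pos_of ht (i := i + 1) (by omega) (by omega)
  have h2 := sin_pos_of ht (i := j + 1) (by omega) (by omega)
  have h3 := sin_pos_of ht (i := i + j + 1) (by omega) (by omega)
  have key := sin_identity (i * t) (j * t) t
  have e1 : ((i + 1 : ℕ) : ℝ) * t = i * t + t := by push_cast; ring
  have e2 : ((j + 1 : ℕ) : ℝ) * t = j * t + t := by push_cast; ring
  have e3 : ((i + j + 1 : ℕ) : ℝ) * t = i * t + j * t + t := by push_cast; ring
  have e4 : ((i + j + 2 : ℕ) : ℝ) * t = i * t + j * t + 2 * t := by push_cast; ring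
  have e5 : ((i + j : ℕ) : ℝ) * t = i * t + j * t := by push_cast; ring
  unfold hr
  rw [show (((i + j : ℕ) : ℝ) + 1) * t = i * t + j * t + t by push_cast; ring,
    show ((i : ℝ) + 1) * t = i * t + t by ring, show ((j : ℝ) + 1) * t = j * t + t by ring]
  rw [e1] at h1
  rw [e2] at h2
  rw [e3] at h3
  rw [e1, e2, e3, e4, e5, ← key]
  generalize Real.sin (i * t + t) = u1 at *
  generalize Real.sin (j * t + t) = u2 at *
  generalize Real.sin (i * t + j * t + t) = u3 at *
  field_simp

theorem hr_superadd {m : ℕ} {t : ℝ} (ht : t = Real.pi / (m + 1)) {i j : ℕ} (h : i + j + 1 ≤ m) :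
    hr t (i + j) ≤ hr t i + hr t j := by
  have h1 := sin_pos_of ht (i := i + 1) (by omega) (by omega)
  have h2 := sin_pos_of ht (i := j + 1) (by omega) (by omega)
  have h3 := sin_pos_of ht (i := i + j + 1) (by omega) (by omega)
  have h4 := sin_nonneg_of ht (i := i) (by omega)
  have h5 := sin_nonneg_of ht (i := j) (by omega)
  have h6 := sin_nonneg_of ht (i := i + j + 2) (by omega)
  have := hr_diff ht h
  have h7 : 0 ≤ hr t i + hr t j - hr t (i + j) := by rw [this]; positivity
  linarith

theorem hr_superadd_strict {m : ℕ} {t : ℝ} (ht : t = Real.pi / (m + 1)) {i j : ℕ}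
    (h : i + j + 2 ≤ m) (hi : 0 < i) (hj : 0 < j) :
    hr t (i + j) < hr t i + hr t j := by
  have h1 := sin_pos_of ht (i := i + 1) (by omega) (by omega)
  have h2 := sin_pos_of ht (i := j + 1) (by omega) (by omega)
  have h3 := sin_pos_of ht (i := i + j + 1) (by omega) (by omega)
  have h4 := sin_pos_of ht (i := i) (by omega) (by omega)
  have h5 := sin_pos_of ht (i := j) (by omega) (by omega)
  have h6 := sin_pos_of ht (i := i + j + 2) (by omega) (by omega)
  have := hr_diff ht (i := i) (j := j) (by omega)
  have h7 : 0 < hr t i + hr t j - hr t (i + j) := by rw [this]; positivity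
  linarith

theorem sin_three (t y : ℝ) : Real.sin (y - t) + Real.sin (y + t) = 2 * Real.cos t * Real.sin y := by
  rw [Real.sin_sub, Real.sin_add]; ring

theorem hr_zero (t : ℝ) : hr t 0 = 0 := by simp [hr]

theorem hr_rec {m : ℕ} {t : ℝ} (ht : t = Real.pi / (m + 1)) {b : ℕ} (hb : b + 2 ≤ m) :
    (2 * Real.cos t - hr t b) * hr t (b + 1) = 1 ∧ 0 < hr t (b + 1) := by
  have h1 := sin_pos_of ht (i := b + 1) (by omega) (by omega)
  have h2 := sin_pos_of ht (i := b + 2) (by omega) (by omega)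
  have key := sin_three t ((b + 1) * t)
  unfold hr
  push_cast at h1 h2 ⊢
  rw [show ((b : ℝ) + 1) * t - t = b * t by ring,
    show ((b : ℝ) + 1) * t + t = (b + 2) * t by ring] at key
  rw [show ((b : ℝ) + 1 + 1) = b + 2 by ring]
  generalize Real.sin (((b : ℝ) + 1) * t) = u1 at *
  generalize Real.sin (((b : ℝ) + 2) * t) = u2 at *
  constructor
  · field_simp
    linarith
  · positivity

theorem hr_last {m : ℕ} {t : ℝ} (ht : t = Real.pi / (m + 1)) (hm : 0 < m) :
    hr t (m - 1) = 2 * Real.cos t := by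
  obtain ⟨k, rfl⟩ : ∃ k, m = k + 1 := ⟨m - 1, by omega⟩
  have h1 := sin_pos_of ht (i := k + 1) (by omega) (by omega)
  have key := sin_three t ((k + 1) * t)
  have e : ((k : ℝ) + 1) * t + t = Real.pi := by
    rw [ht]; push_cast; field_simp
  rw [e, Real.sin_pi, show ((k : ℝ) + 1) * t - t = k * t by ring] at key
  unfold hr
  push_cast at h1
  rw [Nat.add_sub_cancel, div_eq_iff h1.ne']
  linarith

end Trig

section Tree

variable {V : Type*} [Fintype V] [DecidableEq V]

/-- rooted connected vertex sets, built by joining -/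
inductive RTr (G : SimpleGraph V) : Finset V → V → Prop
  | single (v : V) : RTr G {v} v
  | join (A B : Finset V) (v c : V) (hA : RTr G A v) (hB : RTr G B c) (hd : Disjoint A B)
      (hadj : G.Adj v c) : RTr G (A ∪ B) v

theorem RTr.mem {G : SimpleGraph V} {S : Finset V} {v : V} (h : RTr G S v) : v ∈ S := by
  induction h with
  | single v => simp
  | join A B v c hA hB hd hadj ihA ihB => exact Finset.mem_union_left _ ihA

theorem RTr.grow {G : SimpleGraph V} {S : Finset V} {v : V} (h : RTr G S v) (w z : V) (hw : w ∈ S)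
    (hz : z ∉ S) (hwz : G.Adj w z) : RTr G (insert z S) v := by
  induction h with
  | single v =>
    rw [Finset.mem_singleton] at hw
    subst hw
    have := RTr.join {w} {z} w z (RTr.single w) (RTr.single z)
      (by simpa using fun h => hz (by simp [h])) hwz
    rwa [Finset.union_comm, ← Finset.insert_eq] at this
  | join A B v c hA hB hd hadj ihA ihB =>
    rw [Finset.mem_union, not_or] at hz
    rw [Finset.mem_union] at hw
    rcases hw with hw | hw
    · rw [← Finset.insert_union]
      exact RTr.join _ _ _ _ (ihA hw hz.1) hB (by
        rw [Finset.disjoint_insert_left]; exact ⟨hz.2, hd⟩) hadj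
    · rw [← Finset.union_insert]
      exact RTr.join _ _ _ _ hA (ihB hw hz.2) (by
        rw [Finset.disjoint_insert_right]; exact ⟨hz.1, hd⟩) hadj

theorem exists_cross {G : SimpleGraph V} (hG : G.Connected) (S : Finset V) (v : V) (hv : v ∈ S)
    (u : V) (hu : u ∉ S) : ∃ w ∈ S, ∃ z, z ∉ S ∧ G.Adj w z := by
  obtain ⟨p⟩ := hG.preconnected v u
  induction p with
  | nil => exact absurd hv hu
  | @cons a b c h p ih =>
    by_cases hb : b ∈ S
    · exact ih hb hu
    · exact ⟨a, hv, b, hb, h⟩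

theorem RTr.exists_card {G : SimpleGraph V} (hG : G.Connected) (v : V) :
    RTr G Finset.univ v := by
  have : ∀ k, k + 1 ≤ Fintype.card V → ∃ S, RTr G S v ∧ S.card = k + 1 := by
    intro k
    induction k with
    | zero => exact fun _ => ⟨{v}, RTr.single v, by simp⟩
    | succ k ih =>
      intro hk
      obtain ⟨S, hS, hc⟩ := ih (by omega)
      obtain ⟨u, hu⟩ : ∃ u, u ∉ S := by
        by_contra! h
        have := Finset.eq_univ_iff_forall.2 h
        rw [this, Finset.card_univ] at hc
        omega
      obtain ⟨w, hw, z, hz, hwz⟩ := exists_cross hG S v hS.mem u hu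
      exact ⟨_, hS.grow w z hw hz hwz, by rw [Finset.card_insert_of_notMem hz, hc]⟩
  have hpos : 0 < Fintype.card V := Fintype.card_pos_iff.2 ⟨v⟩
  obtain ⟨S, hS, hc⟩ := this (Fintype.card V - 1) (by omega)
  have : S = Finset.univ := by
    rw [← Finset.card_eq_iff_eq_univ]; omega
  rwa [this] at hS

theorem RTr.three {G : SimpleGraph V} (hG : G.Connected) (v a b c : V)
    (hab : a ≠ b) (hac : a ≠ c) (hbc : b ≠ c) (hva : G.Adj v a) (hvb : G.Adj v b)
    (hvc : G.Adj v c) :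
    ∃ A B Z, RTr G A a ∧ RTr G B b ∧ RTr G Z v ∧ 2 ≤ Z.card ∧ Disjoint A B ∧ Disjoint A Z ∧
      Disjoint B Z ∧ A.card + B.card + Z.card = Fintype.card V := by
  have : ∀ k, k + 4 ≤ Fintype.card V → ∃ A B Z, RTr G A a ∧ RTr G B b ∧ RTr G Z v ∧ 2 ≤ Z.card ∧
      Disjoint A B ∧ Disjoint A Z ∧ Disjoint B Z ∧ A.card + B.card + Z.card = k + 4 := by
    intro k
    induction k with
    | zero =>
      intro _
      have := hva.ne
      have := hvb.ne
      have := hvc.ne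
      refine ⟨{a}, {b}, {v} ∪ {c}, RTr.single a, RTr.single b,
        RTr.join _ _ _ _ (RTr.single v) (RTr.single c) (by simpa using hvc.ne) hvc, ?_, ?_, ?_, ?_, ?_⟩
      · rw [Finset.card_union_of_disjoint (by simpa using hvc.ne)]; simp
      · simpa using hab
      · simp; tauto
      · simp; tauto
      · rw [Finset.card_union_of_disjoint (by simpa using hvc.ne)]; simp
    | succ k ih =>
      intro hk
      obtain ⟨A, B, Z, hA, hB, hZ, h2, dAB, dAZ, dBZ, hc⟩ := ih (by omega)
      have hcard : (A ∪ B ∪ Z).card = k + 4 := by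
        rw [Finset.card_union_of_disjoint (by rw [Finset.disjoint_union_left]; exact ⟨dAZ, dBZ⟩),
          Finset.card_union_of_disjoint dAB, hc]
      obtain ⟨u, hu⟩ : ∃ u, u ∉ A ∪ B ∪ Z := by
        by_contra! h
        have := Finset.eq_univ_iff_forall.2 h
        rw [this, Finset.card_univ] at hcard
        omega
      obtain ⟨w, hw, z, hz, hwz⟩ := exists_cross hG (A ∪ B ∪ Z) v (by simp [hZ.mem]) u hu
      simp only [Finset.mem_union, not_or] at hz hw
      obtain ⟨⟨hzA, hzB⟩, hzZ⟩ := hz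
      rcases hw with (hw | hw) | hw
      · refine ⟨insert z A, B, Z, hA.grow w z hw hzA hwz, hB, hZ, h2, ?_, ?_, dBZ, ?_⟩
        · rw [Finset.disjoint_insert_left]; exact ⟨hzB, dAB⟩
        · rw [Finset.disjoint_insert_left]; exact ⟨hzZ, dAZ⟩
        · rw [Finset.card_insert_of_notMem hzA]; omega
      · refine ⟨A, insert z B, Z, hA, hB.grow w z hw hzB hwz, hZ, h2, ?_, dAZ, ?_, ?_⟩
        · rw [Finset.disjoint_insert_right]; exact ⟨hzA, dAB⟩
        · rw [Finset.disjoint_insert_left]; exact ⟨hzZ, dBZ⟩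
        · rw [Finset.card_insert_of_notMem hzB]; omega
      · refine ⟨A, B, insert z Z, hA, hB, hZ.grow w z hw hzZ hwz, ?_, dAB, ?_, ?_, ?_⟩
        · rw [Finset.card_insert_of_notMem hzZ]; omega
        · rw [Finset.disjoint_insert_right]; exact ⟨hzA, dAZ⟩
        · rw [Finset.disjoint_insert_right]; exact ⟨hzB, dBZ⟩
        · rw [Finset.card_insert_of_notMem hzZ]; omega
  have h4 : 4 ≤ Fintype.card V := by
    have h := Finset.card_le_univ ({v, a, b, c} : Finset V)
    rwa [Finset.card_eq_of_equiv_fin (n := 4)] at h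
    refine Finset.equivFinOfCardEq ?_
    have := hva.ne
    have := hvb.ne
    have := hvc.ne
    rw [Finset.card_insert_of_notMem (by simp; tauto), Finset.card_insert_of_notMem (by simp; tauto),
      Finset.card_insert_of_notMem (by simp; tauto), Finset.card_singleton]
  obtain ⟨A, B, Z, h⟩ := this (Fintype.card V - 4) (by omega)
  exact ⟨A, B, Z, by rw [show Fintype.card V - 4 + 4 = Fintype.card V by omega] at h; exact h⟩

/-- Lower bound on the partial neighbour sum at the root. -/
theorem RTr.bound {G : SimpleGraph V} {x : V → ℝ} (hx : ∀ v, 0 < x v) {mu t : ℝ}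
    (ht : t = Real.pi / ((Fintype.card V : ℕ) + 1))
    (hmu : mu ≤ 2 * Real.cos t) (hsup : ∀ v, ∑ w, adjMat G v w * x w ≤ mu * x v)
    {S : Finset V} {v : V} (h : RTr G S v) :
    hr t (S.card - 1) * x v ≤ ∑ w ∈ S, adjMat G v w * x w ∧
    ∀ u, u ∉ S → G.Adj v u → hr t S.card * x u ≤ x v := by
  have hnn : ∀ v w, 0 ≤ adjMat G v w * x w := fun v w => mul_nonneg (adjMat_nonneg G v w) (hx w).le
  have second : ∀ (S : Finset V) (v : V), v ∈ S →
      hr t (S.card - 1) * x v ≤ ∑ w ∈ S, adjMat G v w * x w →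
      ∀ u, u ∉ S → G.Adj v u → hr t S.card * x u ≤ x v := by
    intro S v hv hb u hu hadj
    have hc0 : 0 < S.card := Finset.card_pos.2 ⟨v, hv⟩
    have hc1 : S.card < Fintype.card V := by
      have := Finset.card_le_univ (insert u S)
      rw [Finset.card_insert_of_notMem hu] at this
      omega
    obtain ⟨b, hbc⟩ : ∃ b, S.card = b + 1 := ⟨S.card - 1, by omega⟩
    rw [hbc] at hb ⊢
    rw [Nat.add_sub_cancel] at hb
    obtain ⟨h1, h2⟩ := hr_rec ht (b := b) (by omega)
    have h3 : ∑ w ∈ insert u S, adjMat G v w * x w ≤ mu * x v :=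
      (Finset.sum_le_sum_of_subset_of_nonneg (Finset.subset_univ _) (fun w _ _ => hnn v w)).trans
        (hsup v)
    rw [Finset.sum_insert hu, adjMat_of_adj hadj, one_mul] at h3
    have h4 : x u ≤ (2 * Real.cos t - hr t b) * x v := by
      have := mul_le_mul_of_nonneg_right hmu (hx v).le
      rw [sub_mul]; linarith
    calc hr t (b + 1) * x u ≤ hr t (b + 1) * ((2 * Real.cos t - hr t b) * x v) := by gcongr
      _ = ((2 * Real.cos t - hr t b) * hr t (b + 1)) * x v := by ring
      _ = x v := by rw [h1, one_mul]
  have first : hr t (S.card - 1) * x v ≤ ∑ w ∈ S, adjMat G v w * x w := by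
    induction h with
    | single v => simp [hr_zero, adjMat_of_not_adj]
    | join A B v c hA hB hd hadj ihA ihB =>
      have hvA := hA.mem
      have hcB := hB.mem
      have hvB : v ∉ B := Finset.disjoint_left.1 hd hvA
      have h1 := second B c hcB ihB v hvB hadj.symm
      rw [Finset.sum_union hd, Finset.card_union_of_disjoint hd]
      have hc0 : 0 < A.card := Finset.card_pos.2 ⟨v, hvA⟩
      have hcu : A.card + B.card ≤ Fintype.card V := by
        rw [← Finset.card_union_of_disjoint hd]; exact Finset.card_le_univ _
      have h2 := hr_superadd ht (i := A.card - 1) (j := B.card) (by omega)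
      rw [show A.card - 1 + B.card = A.card + B.card - 1 by omega] at h2
      have h3 : x c ≤ ∑ w ∈ B, adjMat G v w * x w := by
        have := Finset.single_le_sum (f := fun w => adjMat G v w * x w) (fun w _ => hnn v w) hcB
        simpa [adjMat_of_adj hadj] using this
      have h4 := mul_le_mul_of_nonneg_right h2 (hx v).le
      rw [add_mul] at h4
      linarith
  exact ⟨first, second S v h.mem first⟩

theorem super_ge {G : SimpleGraph V} (hG : G.Connected) {x : V → ℝ} (hx : ∀ v, 0 < x v) {mu t : ℝ}
    (ht : t = Real.pi / ((Fintype.card V : ℕ) + 1))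
    (hsup : ∀ v, ∑ w, adjMat G v w * x w ≤ mu * x v) : 2 * Real.cos t ≤ mu := by
  by_contra! hlt
  obtain ⟨v⟩ := hG.nonempty
  have h := ((RTr.exists_card hG v).bound hx ht hlt.le hsup).1
  rw [Finset.card_univ, hr_last ht (Fintype.card_pos_iff.2 ⟨v⟩)] at h
  have := le_of_mul_le_mul_right (h.trans (hsup v)) (hx v)
  linarith

theorem super_eq_deg {G : SimpleGraph V} (hG : G.Connected) {x : V → ℝ} (hx : ∀ v, 0 < x v)
    {t : ℝ} (ht : t = Real.pi / ((Fintype.card V : ℕ) + 1))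
    (hsup : ∀ v, ∑ w, adjMat G v w * x w ≤ 2 * Real.cos t * x v)
    (v a b c : V) (hva : G.Adj v a) (hvb : G.Adj v b) (hvc : G.Adj v c)
    (hab : a ≠ b) (hac : a ≠ c) (hbc : b ≠ c) : False := by
  have hnn : ∀ v w, 0 ≤ adjMat G v w * x w := fun v w => mul_nonneg (adjMat_nonneg G v w) (hx w).le
  obtain ⟨A, B, Z, hA, hB, hZ, h2, dAB, dAZ, dBZ, hcard⟩ :=
    RTr.three hG v a b c hab hac hbc hva hvb hvc
  have hvA : v ∉ A := Finset.disjoint_right.1 dAZ hZ.mem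
  have hvB : v ∉ B := Finset.disjoint_right.1 dBZ hZ.mem
  have eA := (hA.bound hx ht le_rfl hsup).2 v hvA hva.symm
  have eB := (hB.bound hx ht le_rfl hsup).2 v hvB hvb.symm
  have eZ := (hZ.bound hx ht le_rfl hsup).1
  have haZ : a ∉ Z := Finset.disjoint_left.1 dAZ hA.mem
  have hbZ : b ∉ Z := Finset.disjoint_left.1 dBZ hB.mem
  have hsum : ∑ w ∈ insert a (insert b Z), adjMat G v w * x w ≤ 2 * Real.cos t * x v :=
    (Finset.sum_le_sum_of_subset_of_nonneg (Finset.subset_univ _) (fun w _ _ => hnn v w)).trans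
      (hsup v)
  rw [Finset.sum_insert (by simp [hab, haZ]), Finset.sum_insert hbZ, adjMat_of_adj hva,
    adjMat_of_adj hvb, one_mul, one_mul] at hsum
  have hA0 : 0 < A.card := Finset.card_pos.2 ⟨a, hA.mem⟩
  have hB0 : 0 < B.card := Finset.card_pos.2 ⟨b, hB.mem⟩
  have s1 := hr_superadd_strict ht (i := A.card) (j := B.card) (by omega) hA0 hB0
  have s2 := hr_superadd ht (i := A.card + B.card) (j := Z.card - 1) (by omega)
  rw [show A.card + B.card + (Z.card - 1) = Fintype.card V - 1 by omega,
    hr_last ht (by omega)] at s2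
  have := mul_lt_mul_of_pos_right (s2.trans_lt (add_lt_add_left s1 _)) (hx v)
  rw [add_mul, add_mul] at this
  linarith

theorem super_eq_leaf {G : SimpleGraph V} (hG : G.Connected) {x : V → ℝ} (hx : ∀ v, 0 < x v)
    {t : ℝ} (ht : t = Real.pi / ((Fintype.card V : ℕ) + 1))
    (hsup : ∀ v, ∑ w, adjMat G v w * x w ≤ 2 * Real.cos t * x v) :
    ∃ v, ∀ a b, G.Adj v a → G.Adj v b → a = b := by
  by_contra! hcon
  obtain ⟨v0⟩ := hG.nonempty
  have hpos : 0 < ∑ v, x v := Finset.sum_pos (fun v _ => hx v) ⟨v0, Finset.mem_univ _⟩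
  have h1 : ∑ v, (1 : ℝ) * ∑ w, adjMat G v w * x w ≤ ∑ v, 2 * Real.cos t * x v :=
    Finset.sum_le_sum fun v _ => by rw [one_mul]; exact hsup v
  rw [sum_adj_comm, ← Finset.mul_sum] at h1
  have h2 : ∑ w, x w * 2 ≤ ∑ w, x w * ∑ v, adjMat G w v * 1 := by
    refine Finset.sum_le_sum fun w _ => mul_le_mul_of_nonneg_left ?_ (hx w).le
    obtain ⟨a, b, ha, hb, hab⟩ := hcon w
    have : ∑ v ∈ {a, b}, adjMat G w v * 1 ≤ ∑ v, adjMat G w v * 1 :=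
      Finset.sum_le_sum_of_subset_of_nonneg (Finset.subset_univ _)
        (fun v _ _ => by rw [mul_one]; exact adjMat_nonneg _ _ _)
    rw [Finset.sum_pair hab, adjMat_of_adj ha, adjMat_of_adj hb] at this
    linarith
  rw [← Finset.sum_mul] at h2
  have h3 : Real.cos t < 1 := by
    have hpi := Real.pi_pos
    have : 0 < t := by rw [ht]; positivity
    have h' : t ≤ Real.pi := by rw [ht]; exact div_le_self hpi.le (by linarith [Nat.cast_nonneg (α := ℝ) (Fintype.card V)])
    rw [← Real.cos_zero]
    exact Real.cos_lt_cos_of_nonneg_of_le_pi le_rfl h' this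
  nlinarith

theorem exists_pred {G : SimpleGraph V} (hG : G.Connected) (r v : V) (hv : v ≠ r) :
    ∃ w, G.Adj v w ∧ G.dist r v = G.dist r w + 1 := by
  obtain ⟨p, hp⟩ := hG.exists_walk_length_eq_dist v r
  cases p with
  | nil => exact absurd rfl hv
  | @cons _ b _ h q =>
    refine ⟨b, h, ?_⟩
    rw [SimpleGraph.Walk.length_cons] at hp
    have h1 := SimpleGraph.dist_le q
    rw [SimpleGraph.dist_comm (u := r), SimpleGraph.dist_comm (u := r)]
    have h2 := hG.dist_triangle (u := v) (v := b) (w := r)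
    rw [SimpleGraph.dist_eq_one_iff_adj.2 h] at h2
    omega

theorem path_of_deg {G : SimpleGraph V} (hG : G.Connected)
    (hdeg : ∀ v a b c, G.Adj v a → G.Adj v b → G.Adj v c → a ≠ b → a ≠ c → b ≠ c → False)
    (hleaf : ∃ v, ∀ a b, G.Adj v a → G.Adj v b → a = b) :
    Nonempty (G ≃g SimpleGraph.pathGraph (Fintype.card V)) := by
  obtain ⟨r, hr⟩ := hleaf
  have hinj : ∀ k v w, G.dist r v = k → G.dist r w = k → v = w := by
    intro k
    induction k with
    | zero =>
      intro v w hv hw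
      rw [hG.dist_eq_zero_iff] at hv hw
      rw [← hv, ← hw]
    | succ k ih =>
      intro v w hv hw
      have hvr : v ≠ r := by rintro rfl; simp at hv
      have hwr : w ≠ r := by rintro rfl; simp at hw
      obtain ⟨p, hp, hpd⟩ := exists_pred hG r v hvr
      obtain ⟨q, hq, hqd⟩ := exists_pred hG r w hwr
      obtain rfl := ih p q (by omega) (by omega)
      by_contra hne
      by_cases hpr : p = r
      · subst hpr
        exact hne (hr v w hp.symm hq.symm)
      · obtain ⟨s, hs, hsd⟩ := exists_pred hG r p hpr
        refine hdeg p v w s hp.symm hq.symm hs hne ?_ ?_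
        · rintro rfl; omega
        · rintro rfl; omega
  have hlt : ∀ v, G.dist r v < Fintype.card V := by
    intro v
    obtain ⟨p, hp, hl⟩ := hG.exists_path_of_dist r v
    rw [← hl]
    exact hp.length_lt
  let f : V → Fin (Fintype.card V) := fun v => ⟨G.dist r v, hlt v⟩
  have hf : Function.Injective f := by
    intro v w h
    exact hinj _ v w (Fin.mk.inj_iff.1 h) rfl
  have hb : Function.Bijective f := by
    rw [Fintype.bijective_iff_injective_and_card]
    exact ⟨hf, by simp⟩
  have key : ∀ v w, G.dist r v + 1 = G.dist r w → G.Adj v w := by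
    intro v w h
    obtain ⟨p, hp, hpd⟩ := exists_pred hG r w (by rintro rfl; simp at h)
    obtain rfl := hinj _ p v (by omega) rfl
    exact hp.symm
  refine ⟨⟨Equiv.ofBijective f hb, ?_⟩⟩
  intro v w
  rw [SimpleGraph.pathGraph_adj]
  simp only [Equiv.ofBijective_apply, f]
  constructor
  · rintro (h | h)
    · exact key v w h
    · exact (key w v h).symm
  · intro h
    have hne : G.dist r v ≠ G.dist r w := fun h' => h.ne (hinj _ v w h' rfl)
    have h1 := hG.dist_triangle (u := r) (v := v) (w := w)
    have h2 := hG.dist_triangle (u := r) (v := w) (w := v)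
    rw [SimpleGraph.dist_eq_one_iff_adj.2 h] at h1
    rw [SimpleGraph.dist_eq_one_iff_adj.2 h.symm] at h2
    omega

end Tree

section Corona

variable {V : Type*} [DecidableEq V]

/-- `S` carries a spanning tree of `G` rooted at `r`, encoded by a depth function. -/
def RT (G : SimpleGraph V) (S : Finset V) (r : V) : Prop :=
  r ∈ S ∧ ∃ d : V → ℕ, d r = 0 ∧ ∀ v ∈ S, v ≠ r → ∃ w ∈ S, G.Adj v w ∧ d v = d w + 1

/-- `S` is spanned by a corona with core `C` and pendant map `p`. -/
def CorS (G : SimpleGraph V) (S C : Finset V) (p : V → V) : Prop :=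
  C ⊆ S ∧ (∃ q, RT G C q) ∧ (∀ v ∈ C, p v ∈ S ∧ p v ∉ C ∧ G.Adj v (p v)) ∧
    (∀ v ∈ C, ∀ w ∈ C, p v = p w → v = w) ∧ ∀ w ∈ S, w ∉ C → ∃ v ∈ C, p v = w

theorem CorS.card {G : SimpleGraph V} {S C : Finset V} {p : V → V} (h : CorS G S C p) :
    2 * C.card = S.card := by
  obtain ⟨hCS, -, h1, h2, h3⟩ := h
  have hS : S = C ∪ C.image p := by
    ext w
    rw [Finset.mem_union, Finset.mem_image]
    constructor
    · intro hw
      by_cases hwC : w ∈ C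
      · exact Or.inl hwC
      · exact Or.inr (h3 w hw hwC)
    · rintro (hw | ⟨v, hv, rfl⟩)
      · exact hCS hw
      · exact (h1 v hv).1
  have hd : Disjoint C (C.image p) := by
    rw [Finset.disjoint_right]
    intro w hw
    rw [Finset.mem_image] at hw
    obtain ⟨v, hv, rfl⟩ := hw
    exact (h1 v hv).2.1
  rw [hS, Finset.card_union_of_disjoint hd, Finset.card_image_of_injOn (fun v hv w hw => h2 v hv w hw)]
  omega

theorem RT.exists_nbr {G : SimpleGraph V} {C : Finset V} {r : V} (h : RT G C r) (q : V) (hq : q ∈ C)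
    (c : V) (hc : c ∈ C) (hcq : c ≠ q) : ∃ w ∈ C, G.Adj q w := by
  obtain ⟨hr, d, hd0, hd⟩ := h
  by_cases hqr : q = r
  · subst hqr
    obtain ⟨z, hz, hmin⟩ := Finset.exists_min_image (C.erase q) d ⟨c, by simp [hc, hcq]⟩
    rw [Finset.mem_erase] at hz
    obtain ⟨w, hw, hzw, hdw⟩ := hd z hz.2 hz.1
    by_cases hwq : w = q
    · subst hwq; exact ⟨z, hz.2, hzw.symm⟩
    · have := hmin w (by simp [hw, hwq])
      omega
  · obtain ⟨w, hw, h1, -⟩ := hd q hq hqr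
    exact ⟨w, hw, h1⟩

theorem RT.connected {G : SimpleGraph V} {C : Finset V} {r : V} (h : RT G C r) :
    (G.comap (fun v : {v // v ∈ C} => v.1)).Connected := by
  obtain ⟨hr, d, hd0, hd⟩ := h
  have key : ∀ k, ∀ v : {v // v ∈ C}, d v.1 = k →
      (G.comap (fun v : {v // v ∈ C} => v.1)).Reachable v ⟨r, hr⟩ := by
    intro k
    induction k with
    | zero =>
      intro v hv
      by_cases hvr : v.1 = r
      · have : v = ⟨r, hr⟩ := Subtype.ext hvr
        rw [this]
      · obtain ⟨w, hw, h1, h2⟩ := hd v.1 v.2 hvr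
        omega
    | succ k ih =>
      intro v hv
      have hvr : v.1 ≠ r := by intro h'; rw [h'] at hv; omega
      obtain ⟨w, hw, h1, h2⟩ := hd v.1 v.2 hvr
      have h3 := ih ⟨w, hw⟩ (by simp only; omega)
      exact (SimpleGraph.Adj.reachable (show (G.comap _).Adj v ⟨w, hw⟩ from h1)).trans h3
  have : Nonempty {v // v ∈ C} := ⟨⟨r, hr⟩⟩
  exact ⟨fun v w => (key _ v rfl).trans (key _ w rfl).symm⟩

theorem alt_corona (G : SimpleGraph V) (S : Finset V) : ∀ r, RT G S r → 2 ≤ S.card →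
    (∃ D : Finset V, (∀ v ∈ S, v ∉ D → ∃ u ∈ D, G.Adj u v) ∧ 2 * D.card < S.card) ∨
    ∃ C p, CorS G S C p := by
  induction S using Finset.strongInduction with
  | H S ih =>
  intro r hRT hS
  obtain ⟨hr, d, hd0, hd⟩ := hRT
  choose! par hpS hpadj hpd using hd
  obtain ⟨u, hu, hmax⟩ := Finset.exists_max_image (S.erase r) d (by
    rw [← Finset.card_pos, Finset.card_erase_of_mem hr]; omega)
  rw [Finset.mem_erase] at hu
  obtain ⟨hur, huS⟩ := hu
  replace hmax : ∀ v ∈ S, v ≠ r → d v ≤ d u := fun v hv hvr => hmax v (by simp [hv, hvr])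
  obtain ⟨s, hs⟩ : ∃ s, s = par u := ⟨_, rfl⟩
  have hsS : s ∈ S := hs ▸ hpS u huS hur
  have hsd : d u = d s + 1 := hs ▸ hpd u huS hur
  obtain ⟨L, hL⟩ : ∃ L, L = S.filter (fun v => v ≠ r ∧ par v = s) := ⟨_, rfl⟩
  obtain ⟨R, hR⟩ : ∃ R, R = S.filter (fun v => v ≠ s ∧ v ∉ L) := ⟨_, rfl⟩
  have mL : ∀ v, v ∈ L ↔ v ∈ S ∧ v ≠ r ∧ par v = s := fun v => by rw [hL, Finset.mem_filter]
  have mR : ∀ v, v ∈ R ↔ v ∈ S ∧ v ≠ s ∧ v ∉ L := fun v => by rw [hR, Finset.mem_filter]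
  have huL : u ∈ L := (mL u).2 ⟨huS, hur, hs.symm⟩
  have Ladj : ∀ v ∈ L, G.Adj s v := by
    intro v hv
    obtain ⟨h1, h2, h3⟩ := (mL v).1 hv
    have := hpadj v h1 h2
    rw [h3] at this
    exact this.symm
  have Ld : ∀ v ∈ L, d v = d s + 1 := by
    intro v hv
    obtain ⟨h1, h2, h3⟩ := (mL v).1 hv
    rw [hpd v h1 h2, h3]
  have hsL : s ∉ L := fun h => (Ladj s h).ne rfl
  have hcases : ∀ v ∈ S, v = s ∨ v ∈ L ∨ v ∈ R := by
    intro v hv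
    have := mR v
    tauto
  have hdLR : Disjoint L R := by
    rw [Finset.disjoint_left]
    intro v hv hv'
    exact ((mR v).1 hv').2.2 hv
  have hsR : s ∉ R := fun h => ((mR s).1 h).2.1 rfl
  have hSe : S = insert s (L ∪ R) := by
    ext v
    rw [Finset.mem_insert, Finset.mem_union]
    refine ⟨hcases v, ?_⟩
    rintro (rfl | h | h)
    · exact hsS
    · exact ((mL v).1 h).1
    · exact ((mR v).1 h).1
  have hcard : S.card = 1 + L.card + R.card := by
    conv_lhs => rw [hSe]
    rw [Finset.card_insert_of_notMem (by simp [hsL, hsR]), Finset.card_union_of_disjoint hdLR]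
    omega
  have hL0 : 0 < L.card := Finset.card_pos.2 ⟨u, huL⟩
  by_cases hsr : s = r
  · -- everything else hangs at the root
    have hR0 : R = ∅ := by
      rw [Finset.eq_empty_iff_forall_notMem]
      intro v hv
      obtain ⟨h1, h2, h3⟩ := (mR v).1 hv
      have hvr : v ≠ r := hsr ▸ h2
      apply h3
      rw [mL]
      refine ⟨h1, hvr, ?_⟩
      rw [hsr]
      by_contra hne
      have e1 := hpd v h1 hvr
      have e2 := hpd (par v) (hpS v h1 hvr) hne
      have e3 := hmax v h1 hvr
      rw [hsr, hd0] at hsd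
      omega
    rw [hR0, Finset.card_empty] at hcard
    by_cases hL1 : L.card = 1
    · right
      have hLu : ∀ v ∈ L, v = u := fun v hv => Finset.card_le_one.1 hL1.le v hv u huL
      refine ⟨{s}, fun _ => u, by simpa using hsS, ⟨s, by simp, fun _ => 0, rfl, ?_⟩, ?_, ?_, ?_⟩
      · intro v hv hvs
        simp at hv
        exact absurd hv hvs
      · intro v hv
        rw [Finset.mem_singleton] at hv
        subst hv
        exact ⟨huS, by rw [Finset.mem_singleton]; exact (Ladj u huL).ne.symm, Ladj u huL⟩
      · intro v hv w hw _
        rw [Finset.mem_singleton] at hv hw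
        rw [hv, hw]
      · intro w hw hws
        rw [Finset.mem_singleton] at hws
        refine ⟨s, by simp, ?_⟩
        rcases hcases w hw with h | h | h
        · exact absurd h hws
        · exact (hLu w h).symm
        · rw [hR0] at h; simp at h
    · left
      refine ⟨{s}, ?_, by rw [Finset.card_singleton]; omega⟩
      intro v hv hvs
      rw [Finset.mem_singleton] at hvs
      refine ⟨s, by simp, ?_⟩
      rcases hcases v hv with h | h | h
      · exact absurd h hvs
      · exact Ladj v h
      · rw [hR0] at h; simp at h
  · have hrL : r ∉ L := fun h => ((mL r).1 h).2.1 rfl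
    have hrR : r ∈ R := (mR r).2 ⟨hr, fun h => hsr h.symm, hrL⟩
    have hRpar : ∀ v ∈ R, v ≠ r → par v ∈ R := by
      intro v hv hvr
      obtain ⟨h1, h2, h3⟩ := (mR v).1 hv
      refine (mR _).2 ⟨hpS v h1 hvr, fun h => h3 ((mL v).2 ⟨h1, hvr, h⟩), fun h => ?_⟩
      have e1 := Ld _ h
      have e2 := hpd v h1 hvr
      have e3 := hmax v h1 hvr
      omega
    have hRT : RT G R r := ⟨hrR, d, hd0, fun v hv hvr =>
      ⟨par v, hRpar v hv hvr, hpadj v ((mR v).1 hv).1 hvr, hpd v ((mR v).1 hv).1 hvr⟩⟩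
    obtain ⟨p, hp⟩ : ∃ p, p = par s := ⟨_, rfl⟩
    have hsp : G.Adj s p := hp ▸ hpadj s hsS hsr
    have hpd' : d s = d p + 1 := hp ▸ hpd s hsS hsr
    have hpR : p ∈ R := by
      refine (mR p).2 ⟨hp ▸ hpS s hsS hsr, hsp.ne.symm, fun h => ?_⟩
      have := Ld p h
      omega
    have hRss : R ⊂ S := by
      refine ⟨fun v hv => ((mR v).1 hv).1, fun h => hsR (h hsS)⟩
    by_cases hR1 : R.card = 1
    · left
      refine ⟨{s}, ?_, by rw [Finset.card_singleton]; omega⟩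
      intro v hv hvs
      rw [Finset.mem_singleton] at hvs
      refine ⟨s, by simp, ?_⟩
      rcases hcases v hv with h | h | h
      · exact absurd h hvs
      · exact Ladj v h
      · rw [Finset.card_le_one.1 hR1.le v h p hpR]; exact hsp
    have hR2 : 2 ≤ R.card := by
      have : 0 < R.card := Finset.card_pos.2 ⟨p, hpR⟩
      omega
    have hext : ∀ D : Finset V, (∀ v ∈ R, v ∉ D → ∃ u ∈ D, G.Adj u v) →
        ∀ v ∈ S, v ∉ insert s D → ∃ u ∈ insert s D, G.Adj u v := by
      intro D hD v hv hvD
      rw [Finset.mem_insert, not_or] at hvD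
      rcases hcases v hv with h | h | h
      · exact absurd h hvD.1
      · exact ⟨s, by simp, Ladj v h⟩
      · obtain ⟨w, hw, hwv⟩ := hD v h hvD.2
        exact ⟨w, by simp [hw], hwv⟩
    rcases ih R hRss r hRT hR2 with ⟨D, hD, hDc⟩ | ⟨C, π, hcor⟩
    · left
      refine ⟨insert s D, hext D hD, ?_⟩
      have := Finset.card_insert_le s D
      omega
    have hCc := hcor.card
    obtain ⟨hCR, ⟨q0, hq0⟩, h1, h2, h3⟩ := hcor
    have hsC : s ∉ C := fun h => hsR (hCR h)
    by_cases hL1 : L.card = 1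
    swap
    · left
      refine ⟨insert s C, hext C ?_, ?_⟩
      · intro v hv hvC
        obtain ⟨w, hw, rfl⟩ := h3 v hv hvC
        exact ⟨w, hw, (h1 w hw).2.2⟩
      · rw [Finset.card_insert_of_notMem hsC]
        omega
    have hLu : ∀ v ∈ L, v = u := fun v hv => Finset.card_le_one.1 hL1.le v hv u huL
    have huR : u ∉ R := Finset.disjoint_left.1 hdLR huL
    have hus : u ≠ s := (Ladj u huL).ne.symm
    have hRS := hRss.1
    by_cases hpC : p ∈ C
    · right
      have hne : ∀ v ∈ C, v ≠ s := fun v hv h => hsC (h ▸ hv)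
      refine ⟨insert s C, Function.update π s u, ?_, ⟨q0, ?_⟩, ?_, ?_, ?_⟩
      · intro v hv
        rcases Finset.mem_insert.1 hv with rfl | hv
        · exact hsS
        · exact hRS (hCR hv)
      · obtain ⟨hq, e, he0, he⟩ := hq0
        refine ⟨by simp [hq], Function.update e s (e p + 1), ?_, ?_⟩
        · rw [Function.update_of_ne (hne _ hq), he0]
        · intro v hv hvq
          rcases Finset.mem_insert.1 hv with rfl | hv
          · refine ⟨p, by simp [hpC], hsp, ?_⟩
            rw [Function.update_self, Function.update_of_ne (hne _ hpC)]
          · obtain ⟨w, hw, hvw, hew⟩ := he v hv hvq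
            refine ⟨w, by simp [hw], hvw, ?_⟩
            rw [Function.update_of_ne (hne _ hw), Function.update_of_ne (hne _ hv), hew]
      · intro v hv
        rcases Finset.mem_insert.1 hv with rfl | hv
        · rw [Function.update_self, Finset.mem_insert, not_or]
          exact ⟨huS, ⟨hus, fun h => huR (hCR h)⟩, Ladj u huL⟩
        · rw [Function.update_of_ne (hne _ hv), Finset.mem_insert, not_or]
          obtain ⟨a, b, c⟩ := h1 v hv
          exact ⟨hRS a, ⟨fun h => hsR (h ▸ a), b⟩, c⟩
      · intro v hv w hw hvw
        rcases Finset.mem_insert.1 hv with rfl | hv' <;> rcases Finset.mem_insert.1 hw with hw | hw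
        · exact hw.symm
        · rw [Function.update_self, Function.update_of_ne (hne _ hw)] at hvw
          exact absurd (hvw ▸ (h1 w hw).1) huR
        · subst hw
          rw [Function.update_self, Function.update_of_ne (hne _ hv')] at hvw
          exact absurd (hvw ▸ (h1 v hv').1) huR
        · rw [Function.update_of_ne (hne _ hv'), Function.update_of_ne (hne _ hw)] at hvw
          exact h2 v hv' w hw hvw
      · intro w hw hwC
        rw [Finset.mem_insert, not_or] at hwC
        rcases hcases w hw with h | h | h
        · exact absurd h hwC.1
        · exact ⟨s, by simp, by rw [Function.update_self, hLu w h]⟩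
        · obtain ⟨v, hv, rfl⟩ := h3 w h hwC.2
          exact ⟨v, by simp [hv], by rw [Function.update_of_ne (hne _ hv)]⟩
    · obtain ⟨q, hq, hqp⟩ := h3 p hpR hpC
      have hqadj : G.Adj q p := hqp ▸ (h1 q hq).2.2
      by_cases hC1 : C.card = 1
      · right
        have hCq : ∀ v ∈ C, v = q := fun v hv => Finset.card_le_one.1 hC1.le v hv q hq
        have hps : p ≠ s := hsp.ne.symm
        have hqs : q ≠ s := fun h => hsC (h ▸ hq)
        have hqu : q ≠ u := fun h => huR (hCR (h ▸ hq))
        have hpu : p ≠ u := fun h => huR (h ▸ hpR)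
        refine ⟨{p, s}, fun v => if v = s then u else q, ?_, ⟨p, by simp,
          fun v => if v = s then 1 else 0, by simp [hps], ?_⟩, ?_, ?_, ?_⟩
        · intro v hv
          rw [Finset.mem_insert, Finset.mem_singleton] at hv
          rcases hv with rfl | rfl
          · exact hRS hpR
          · exact hsS
        · intro v hv hvp
          rw [Finset.mem_insert, Finset.mem_singleton] at hv
          rcases hv with rfl | rfl
          · exact absurd rfl hvp
          · exact ⟨p, by simp, hsp, by simp [hps]⟩
        · intro v hv
          rw [Finset.mem_insert, Finset.mem_singleton] at hv
          rcases hv with rfl | rfl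
          · simp only [hps, if_false]
            refine ⟨hRS (hCR hq), ?_, hqadj.symm⟩
            rw [Finset.mem_insert, Finset.mem_singleton, not_or]
            exact ⟨hqadj.ne, hqs⟩
          · simp only [if_true]
            refine ⟨huS, ?_, Ladj u huL⟩
            rw [Finset.mem_insert, Finset.mem_singleton, not_or]
            exact ⟨hpu.symm, hus⟩
        · intro v hv w hw hvw
          rw [Finset.mem_insert, Finset.mem_singleton] at hv hw
          rcases hv with rfl | rfl <;> rcases hw with rfl | rfl
          · rfl
          · simp [hps, hqu] at hvw
          · simp [hps, hqu.symm] at hvw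
          · rfl
        · intro w hw hwC
          rw [Finset.mem_insert, Finset.mem_singleton, not_or] at hwC
          rcases hcases w hw with h | h | h
          · exact absurd h hwC.2
          · exact ⟨s, by simp, by simp [hLu w h]⟩
          · refine ⟨p, by simp, ?_⟩
            simp only [hps, if_false]
            by_cases hwC' : w ∈ C
            · exact (hCq w hwC').symm
            · obtain ⟨v, hv, rfl⟩ := h3 w h hwC'
              rw [hCq v hv, hqp] at hwC
              exact absurd rfl hwC.1
      · left
        obtain ⟨c, hc, hcq⟩ : ∃ c ∈ C, c ≠ q := by
          have : 0 < (C.erase q).card := by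
            rw [Finset.card_erase_of_mem hq]
            have : 0 < C.card := Finset.card_pos.2 ⟨q, hq⟩
            omega
          obtain ⟨c, hc⟩ := Finset.card_pos.1 this
          rw [Finset.mem_erase] at hc
          exact ⟨c, hc.2, hc.1⟩
        obtain ⟨w, hwC, hqw⟩ := hq0.exists_nbr q hq c hc hcq
        refine ⟨insert s (C.erase q), ?_, ?_⟩
        · intro v hv hvD
          rw [Finset.mem_insert, Finset.mem_erase, not_or] at hvD
          rcases hcases v hv with h | h | h
          · exact absurd h hvD.1
          · exact ⟨s, by simp, Ladj v h⟩
          · by_cases hvC : v ∈ C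
            · have hvq : v = q := by
                by_contra h'
                exact hvD.2 ⟨h', hvC⟩
              exact ⟨w, by simp [hwC, hqw.ne.symm], by rw [hvq]; exact hqw.symm⟩
            · obtain ⟨v', hv', rfl⟩ := h3 v h hvC
              by_cases hv'q : v' = q
              · rw [hv'q, hqp]
                exact ⟨s, by simp, hsp⟩
              · exact ⟨v', by simp [hv', hv'q], (h1 v' hv').2.2⟩
        · have e1 := Finset.card_insert_le s (C.erase q)
          rw [Finset.card_erase_of_mem hq] at e1
          have : 0 < C.card := Finset.card_pos.2 ⟨q, hq⟩
          omega

end Corona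

section Final

theorem corona_inl_inl {V : Type*} (H : SimpleGraph V) (u v : V) :
    (corona H).Adj (Sum.inl u) (Sum.inl v) ↔ H.Adj u v := by
  simp only [corona, SimpleGraph.fromRel_adj]
  constructor
  · rintro ⟨-, (⟨a, b, ha, hb, h⟩ | ⟨a, ha, hb⟩) | (⟨a, b, ha, hb, h⟩ | ⟨a, ha, hb⟩)⟩
    · cases ha; cases hb; exact h
    · cases hb
    · cases ha; cases hb; exact h.symm
    · cases hb
  · intro h
    exact ⟨fun h' => h.ne (Sum.inl.inj h'), Or.inl (Or.inl ⟨u, v, rfl, rfl, h⟩)⟩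

theorem corona_inl_inr {V : Type*} (H : SimpleGraph V) (u v : V) :
    (corona H).Adj (Sum.inl u) (Sum.inr v) ↔ u = v := by
  simp only [corona, SimpleGraph.fromRel_adj]
  constructor
  · rintro ⟨-, (⟨a, b, ha, hb, h⟩ | ⟨a, ha, hb⟩) | (⟨a, b, ha, hb, h⟩ | ⟨a, ha, hb⟩)⟩
    · cases hb
    · cases ha; cases hb; rfl
    · cases ha
    · cases ha
  · rintro rfl
    exact ⟨by simp, Or.inl (Or.inr ⟨u, rfl, rfl⟩)⟩

theorem corona_inr_inr {V : Type*} (H : SimpleGraph V) (u v : V) :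
    ¬ (corona H).Adj (Sum.inr u) (Sum.inr v) := by
  simp [corona, SimpleGraph.fromRel_adj]

theorem path_eigen {m : ℕ} {t : ℝ} (ht : t = Real.pi / (m + 1)) (i : Fin m) :
    ∑ j : Fin m, adjMat (SimpleGraph.pathGraph m) i j * Real.sin (((j : ℕ) + 1) * t)
      = 2 * Real.cos t * Real.sin (((i : ℕ) + 1) * t) := by
  have h0 : ∀ j : Fin m, adjMat (SimpleGraph.pathGraph m) i j * Real.sin (((j : ℕ) + 1) * t)
      = (if (j : ℕ) = i + 1 then Real.sin (((j : ℕ) + 1) * t) else 0)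
        + (if (j : ℕ) + 1 = i then Real.sin (((j : ℕ) + 1) * t) else 0) := by
    intro j
    by_cases h : (SimpleGraph.pathGraph m).Adj i j
    · rw [adjMat_of_adj h, one_mul]
      rw [SimpleGraph.pathGraph_adj] at h
      rcases h with h | h
      · rw [if_pos h.symm, if_neg (by omega), add_zero]
      · rw [if_neg (by omega), if_pos h, zero_add]
    · rw [adjMat_of_not_adj h, zero_mul]
      rw [SimpleGraph.pathGraph_adj, not_or] at h
      rw [if_neg (fun h' => h.1 h'.symm), if_neg h.2, add_zero]
  rw [Finset.sum_congr rfl fun j _ => h0 j, Finset.sum_add_distrib,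
    Fin.sum_univ_eq_sum_range (fun j => if j = (i : ℕ) + 1 then Real.sin (((j : ℕ) + 1) * t) else 0) m,
    Fin.sum_univ_eq_sum_range (fun j => if j + 1 = (i : ℕ) then Real.sin (((j : ℕ) + 1) * t) else 0) m,
    ← sin_three, add_comm]
  congr 1
  · rw [show (((i : ℕ) : ℝ) + 1) * t - t = (i : ℕ) * t by ring]
    have hi := i.2
    rcases hk : (i : ℕ) with _ | k
    · simp
    · rw [Finset.sum_eq_single k]
      · simp
      · intro b _ hb
        rw [if_neg (by omega)]
      · intro h
        rw [Finset.mem_range] at h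
        omega
  · rw [Finset.sum_ite_eq']
    simp only [Finset.mem_range]
    split_ifs with h
    · congr 1; push_cast; ring
    · have : (i : ℕ) + 1 = m := by have := i.2; omega
      have : ((i : ℕ) : ℝ) + 1 = m := by exact_mod_cast this
      rw [this, show (m : ℝ) * t + t = Real.pi by rw [ht]; field_simp, Real.sin_pi]

/-- positive root of `L - 1/L = 2c` -/
theorem exists_L (c : ℝ) : ∃ L : ℝ, 0 < L ∧ L * L = 2 * c * L + 1 := by
  have h := Real.sq_sqrt (show 0 ≤ c ^ 2 + 1 by positivity)
  refine ⟨c + Real.sqrt (c ^ 2 + 1), ?_, by nlinarith⟩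
  have : |c| < Real.sqrt (c ^ 2 + 1) := by
    apply Real.lt_sqrt_of_sq_lt
    rw [sq_abs]; linarith
  have := (abs_lt.1 this).1
  linarith

theorem corona_eigen {m : ℕ} (hm : 0 < m) {t L : ℝ} (ht : t = Real.pi / (m + 1)) (hL : 0 < L)
    (hLL : L * L = 2 * Real.cos t * L + 1) :
    ∃ y : Fin m ⊕ Fin m → ℝ, (∀ v, 0 < y v) ∧
      ∀ v, ∑ w, adjMat (corona (SimpleGraph.pathGraph m)) v w * y w = L * y v := by
  have hs : ∀ i : Fin m, 0 < Real.sin (((i : ℕ) + 1) * t) := by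
    intro i
    have := sin_pos_of ht (i := (i : ℕ) + 1) (by omega) (by have := i.2; omega)
    push_cast at this
    exact this
  refine ⟨Sum.elim (fun i => Real.sin (((i : ℕ) + 1) * t)) (fun i => Real.sin (((i : ℕ) + 1) * t) / L),
    ?_, ?_⟩
  · rintro (i | i)
    · exact hs i
    · exact div_pos (hs i) hL
  · have e1 : ∀ i j : Fin m, adjMat (corona (SimpleGraph.pathGraph m)) (Sum.inl i) (Sum.inl j)
        = adjMat (SimpleGraph.pathGraph m) i j := by
      intro i j
      by_cases h : (SimpleGraph.pathGraph m).Adj i j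
      · rw [adjMat_of_adj h, adjMat_of_adj ((corona_inl_inl _ _ _).2 h)]
      · rw [adjMat_of_not_adj h, adjMat_of_not_adj (fun h' => h ((corona_inl_inl _ _ _).1 h'))]
    have e2 : ∀ i j : Fin m, adjMat (corona (SimpleGraph.pathGraph m)) (Sum.inl i) (Sum.inr j)
        = if i = j then 1 else 0 := by
      intro i j
      split_ifs with h
      · rw [adjMat_of_adj ((corona_inl_inr _ _ _).2 h)]
      · rw [adjMat_of_not_adj (fun h' => h ((corona_inl_inr _ _ _).1 h'))]
    have e3 : ∀ i j : Fin m, adjMat (corona (SimpleGraph.pathGraph m)) (Sum.inr i) (Sum.inr j)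
        = 0 := fun i j => adjMat_of_not_adj (corona_inr_inr _ _ _)
    rintro (i | i)
    · rw [Fintype.sum_sum_type]
      simp only [Sum.elim_inl, Sum.elim_inr, e1, e2]
      rw [path_eigen ht]
      simp only [ite_mul, one_mul, zero_mul, Finset.sum_ite_eq, Finset.mem_univ, if_true]
      field_simp
      rw [← hLL]; ring
    · rw [Fintype.sum_sum_type]
      simp only [Sum.elim_inl, Sum.elim_inr, e3, adjMat_symm _ (Sum.inr i), e2]
      simp only [ite_mul, one_mul, zero_mul, Finset.sum_ite_eq', Finset.mem_univ, if_true,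
        Finset.sum_const_zero, add_zero]
      field_simp

theorem iso_eigen {V W : Type*} [Fintype V] [Fintype W] {G : SimpleGraph V} {H : SimpleGraph W}
    (φ : G ≃g H) {y : W → ℝ} {L : ℝ} (h : ∀ v, ∑ w, adjMat H v w * y w = L * y v) (v : V) :
    ∑ w, adjMat G v w * y (φ w) = L * y (φ v) := by
  rw [← h (φ v), ← Equiv.sum_comp φ.toEquiv]
  refine Finset.sum_congr rfl fun w _ => ?_
  have : adjMat H (φ v) (φ.toEquiv w) = adjMat G v w := by
    by_cases hh : G.Adj v w
    · rw [adjMat_of_adj hh]; exact adjMat_of_adj (φ.map_adj_iff.2 hh)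
    · rw [adjMat_of_not_adj hh]; exact adjMat_of_not_adj (fun h' => hh (φ.map_adj_iff.1 h'))
  rw [this]
  rfl

theorem tight {V : Type*} [Fintype V] [DecidableEq V] {G : SimpleGraph V} {x y : V → ℝ} {L : ℝ}
    (hy : ∀ v, 0 < y v) (hy2 : ∀ v, ∑ w, adjMat G v w * y w = L * y v)
    (hx : ∀ v, ∑ w, adjMat G v w * x w ≤ L * x v) (v : V) :
    ∑ w, adjMat G v w * x w = L * x v := by
  have h1 : ∑ v, y v * ∑ w, adjMat G v w * x w = ∑ v, y v * (L * x v) := by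
    rw [sum_adj_comm]
    refine Finset.sum_congr rfl fun w _ => ?_
    rw [hy2]; ring
  have h2 := (Finset.sum_eq_sum_iff_of_le
    (fun v _ => mul_le_mul_of_nonneg_left (hx v) (hy v).le)).1 h1 v (Finset.mem_univ v)
  exact mul_left_cancel₀ (hy v).ne' h2

end Final

theorem domNum_half_min_specRad (n : ℕ) (hn : 2 ≤ n) (heven : Even n)
    (G : SimpleGraph (Fin n)) (hconn : G.Connected) (hdom : domNum G = n / 2) :
    specRad (corona (SimpleGraph.pathGraph (n / 2))) ≤ specRad G ∧
    (specRad G = specRad (corona (SimpleGraph.pathGraph (n / 2))) ↔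
      Nonempty (G ≃g corona (SimpleGraph.pathGraph (n / 2)))) := by
  have hm0 : 0 < n / 2 := by omega
  have h2m : 2 * (n / 2) = n := by obtain ⟨k, hk⟩ := heven; omega
  obtain ⟨m, hm⟩ : ∃ m, m = n / 2 := ⟨_, rfl⟩
  rw [← hm] at hm0 h2m hdom ⊢
  obtain ⟨t, ht⟩ : ∃ t : ℝ, t = Real.pi / ((m : ℕ) + 1) := ⟨_, rfl⟩
  obtain ⟨L, hL, hLL⟩ := exists_L (Real.cos t)
  obtain ⟨y, hy, hyL⟩ := corona_eigen hm0 ht hL hLL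
  have : Nonempty (Fin m) := ⟨⟨0, hm0⟩⟩
  have hspec : specRad (corona (SimpleGraph.pathGraph m)) = L := specRad_eq_of_pos _ y hy L hyL
  rw [hspec]
  have : Nonempty (Fin n) := hconn.nonempty
  obtain ⟨x, hx, hxr⟩ := exists_perron G hconn
  obtain ⟨ρ, hρ⟩ : ∃ ρ, ρ = specRad G := ⟨_, rfl⟩
  rw [← hρ] at hxr ⊢
  -- spanning corona
  obtain ⟨r⟩ := hconn.nonempty
  have hRT : RT G Finset.univ r := by
    refine ⟨Finset.mem_univ _, fun v => G.dist r v, by simp, fun v _ hv => ?_⟩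
    obtain ⟨w, hw1, hw2⟩ := exists_pred hconn r v hv
    exact ⟨w, Finset.mem_univ _, hw1, hw2⟩
  have hcor : ∃ C p, CorS G Finset.univ C p := by
    rcases alt_corona G Finset.univ r hRT (by simpa using hn) with ⟨D, hD, hc⟩ | h
    · exfalso
      have : domNum G ≤ D.card := Nat.sInf_le ⟨D, fun v hv => hD v (Finset.mem_univ v) hv, rfl⟩
      rw [Finset.card_univ, Fintype.card_fin] at hc
      omega
    · exact h
  obtain ⟨C, p, hCp⟩ := hcor
  have hCcard := hCp.card
  rw [Finset.card_univ, Fintype.card_fin] at hCcard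
  obtain ⟨-, ⟨q, hq⟩, h1, h2, h3⟩ := hCp
  obtain ⟨H, hH⟩ : ∃ H, H = G.comap (fun v : {v // v ∈ C} => v.1) := ⟨_, rfl⟩
  have hHconn : H.Connected := hH ▸ hq.connected
  have hHadj : ∀ v w : {v // v ∈ C}, H.Adj v w ↔ G.Adj v.1 w.1 := by
    intro v w; rw [hH]; rfl
  have hWcard : Fintype.card {v // v ∈ C} = m := by
    rw [Fintype.card_coe]; omega
  have hnn : ∀ v w, 0 ≤ adjMat G v w * x w := fun v w => mul_nonneg (adjMat_nonneg G v w) (hx w).le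
  have hHsum : ∀ v : {v // v ∈ C}, ∑ w, adjMat H v w * x w.1 = ∑ w ∈ C, adjMat G v.1 w * x w := by
    intro v
    rw [← Finset.sum_coe_sort C]
    refine Finset.sum_congr rfl fun w _ => ?_
    congr 1
    by_cases h : H.Adj v w
    · rw [adjMat_of_adj h, adjMat_of_adj ((hHadj v w).1 h)]
    · rw [adjMat_of_not_adj h, adjMat_of_not_adj (fun h' => h ((hHadj v w).2 h'))]
  have hpart : ∀ (T : Finset (Fin n)) v, ∑ w ∈ T, adjMat G v w * x w ≤ ρ * x v := by
    intro T v
    rw [← hxr v]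
    exact Finset.sum_le_sum_of_subset_of_nonneg (Finset.subset_univ _) (fun w _ _ => hnn v w)
  have hcore : ∀ v : {v // v ∈ C}, x (p v.1) + ∑ w, adjMat H v w * x w.1 ≤ ρ * x v.1 := by
    intro v
    obtain ⟨-, hb, hc⟩ := h1 v.1 v.2
    have := hpart (insert (p v.1) C) v.1
    rwa [Finset.sum_insert hb, adjMat_of_adj hc, one_mul, ← hHsum] at this
  have hpend : ∀ v ∈ C, x v ≤ ρ * x (p v) := by
    intro v hv
    have := hpart {v} (p v)
    rwa [Finset.sum_singleton, adjMat_of_adj (h1 v hv).2.2.symm, one_mul] at this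
  have hρ0 : 0 < ρ := by
    have := hpend q hq.1
    have h' := hx q
    exact pos_of_mul_pos_left (h'.trans_le this) (hx _).le
  have hpend' : ∀ v ∈ C, 1 / ρ * x v ≤ x (p v) := by
    intro v hv
    rw [one_div, inv_mul_le_iff₀ hρ0]
    exact hpend v hv
  have hsup : ∀ v : {v // v ∈ C}, ∑ w, adjMat H v w * x w.1 ≤ (ρ - 1 / ρ) * x v.1 := by
    intro v
    have e1 := hcore v
    have e2 := hpend' v.1 v.2
    rw [sub_mul]
    linarith
  have ht' : t = Real.pi / ((Fintype.card {v // v ∈ C} : ℕ) + 1) := by rw [hWcard]; exact ht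
  have hge : 2 * Real.cos t ≤ ρ - 1 / ρ :=
    super_ge hHconn (x := fun v => x v.1) (fun v => hx v.1) ht' hsup
  have hge2 : 2 * Real.cos t * ρ + 1 ≤ ρ * ρ := by
    have := mul_le_mul_of_nonneg_right hge hρ0.le
    rw [sub_mul, one_div, inv_mul_cancel₀ hρ0.ne'] at this
    linarith
  refine ⟨?_, ?_, ?_⟩
  · by_contra! hlt
    have e : L - 2 * Real.cos t = 1 / L := by field_simp; linarith
    have e' : 1 / L < 1 / ρ := one_div_lt_one_div_of_lt hρ0 hlt
    linarith
  · intro hρL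
    have hlam : ρ - 1 / ρ = 2 * Real.cos t := by
      rw [hρL]; field_simp; linarith
    rw [hlam] at hsup
    have hx' : ∀ v : {v // v ∈ C}, 0 < x v.1 := fun v => hx v.1
    obtain ⟨φ⟩ : Nonempty (H ≃g SimpleGraph.pathGraph m) := by
      rw [← hWcard]
      exact path_of_deg hHconn (fun v a b c => super_eq_deg hHconn (x := fun v => x v.1) hx' ht' hsup v a b c)
        (super_eq_leaf hHconn (x := fun v => x v.1) hx' ht' hsup)
    have htight : ∀ v : {v // v ∈ C}, ∑ w, adjMat H v w * x w.1 = 2 * Real.cos t * x v.1 := by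
      refine tight (x := fun v : {v // v ∈ C} => x v.1)
        (y := fun v => Real.sin ((((φ v : Fin m) : ℕ) + 1) * t)) ?_ ?_ hsup
      · intro v
        have := sin_pos_of ht (i := ((φ v : Fin m) : ℕ) + 1) (by omega) (by have := (φ v).2; omega)
        push_cast at this
        exact this
      · exact iso_eigen φ (y := fun i : Fin m => Real.sin (((i : ℕ) + 1) * t)) (path_eigen ht)
    have hnb1 : ∀ v ∈ C, ∀ w, G.Adj v w → w ∉ C → w = p v := by
      intro v hv w hvw hwC
      by_contra hne
      obtain ⟨-, hb, hc⟩ := h1 v hv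
      have e1 := hpart (insert w (insert (p v) C)) v
      have e2 := hHsum ⟨v, hv⟩
      rw [Finset.sum_insert (by simp [hne, hwC]), Finset.sum_insert hb, adjMat_of_adj hc,
        adjMat_of_adj hvw, one_mul, one_mul, ← e2, htight ⟨v, hv⟩, ← hlam, sub_mul] at e1
      have e3 := hpend' v hv
      have e4 := hx w
      simp only at e1
      linarith
    have hnb2 : ∀ v ∈ C, ∀ w, G.Adj (p v) w → w = v := by
      intro v hv w hvw
      by_contra hne
      obtain ⟨-, hb, hc⟩ := h1 v hv
      have e1 := hpart {w, v} (p v)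
      rw [Finset.sum_pair hne, adjMat_of_adj hvw, adjMat_of_adj hc.symm, one_mul, one_mul] at e1
      have e2 := hcore ⟨v, hv⟩
      rw [htight ⟨v, hv⟩, ← hlam, sub_mul] at e2
      simp only at e2
      have e3 : x (p v) ≤ 1 / ρ * x v := by linarith
      rw [one_div, ← div_eq_inv_mul, le_div_iff₀ hρ0] at e3
      have e4 := hx w
      linarith
    let f : Fin m ⊕ Fin m → Fin n := Sum.elim (fun i => (φ.symm i).1) (fun i => p (φ.symm i).1)
    have hfinj : Function.Injective f := by
      rintro (i | i) (j | j) h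
      · simp only [f, Sum.elim_inl] at h
        rw [φ.symm.injective (Subtype.ext h)]
      · simp only [f, Sum.elim_inl, Sum.elim_inr] at h
        exact absurd (h ▸ (φ.symm i).2) (h1 _ (φ.symm j).2).2.1
      · simp only [f, Sum.elim_inl, Sum.elim_inr] at h
        exact absurd (h ▸ (φ.symm j).2) (h1 _ (φ.symm i).2).2.1
      · simp only [f, Sum.elim_inr] at h
        have := h2 _ (φ.symm i).2 _ (φ.symm j).2 h
        rw [φ.symm.injective (Subtype.ext this)]
    have hfbij : Function.Bijective f := by
      rw [Fintype.bijective_iff_injective_and_card]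
      refine ⟨hfinj, ?_⟩
      simp only [Fintype.card_sum, Fintype.card_fin]
      omega
    have hadj : ∀ a b, G.Adj (f a) (f b) ↔ (corona (SimpleGraph.pathGraph m)).Adj a b := by
      have hlr : ∀ i j : Fin m, G.Adj (f (Sum.inl i)) (f (Sum.inr j)) ↔ i = j := by
        intro i j
        simp only [f, Sum.elim_inl, Sum.elim_inr]
        constructor
        · intro h
          have := hnb2 _ (φ.symm j).2 _ h.symm
          exact φ.symm.injective (Subtype.ext this)
        · rintro rfl
          exact (h1 _ (φ.symm i).2).2.2
      rintro (i | i) (j | j)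
      · rw [corona_inl_inl, ← φ.symm.map_adj_iff, hHadj]
        rfl
      · rw [corona_inl_inr, hlr]
      · rw [SimpleGraph.adj_comm, SimpleGraph.adj_comm (corona _), corona_inl_inr, hlr]
      · refine iff_of_false ?_ (corona_inr_inr _ _ _)
        intro h
        have : p (φ.symm j).1 = (φ.symm i).1 := hnb2 _ (φ.symm i).2 _ h
        exact (h1 _ (φ.symm j).2).2.1 (this ▸ (φ.symm i).2)
    exact ⟨(⟨Equiv.ofBijective f hfbij, fun {a b} => hadj a b⟩ :
      corona (SimpleGraph.pathGraph m) ≃g G).symm⟩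
  · rintro ⟨φ⟩
    rw [hρ]
    exact specRad_eq_of_pos G (fun v => y (φ v)) (fun v => hy _) L (iso_eigen φ hyL)
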